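/- arXiv:1603.00622 — 2 statements merged into one kernel-verified Lean document; each statement's English description precedes it below -/
import Mathlib

section
/- Let a finite-horizon MDP be given with horizon T, finite state space S, finite action space A, initial distribution μ₁, transition dynamics p, and cost c with values in [0,1]. Let π* (the MPC expert), π_θ (the learned policy), and π_λ (the adaptive teacher) be policies S → PMF A. Suppose: (i) there is δ ≥ 0 such that for every state x, every t ∈ {1,…,T}, and every pair of actions u, u′, the action-conditioned cost-to-go under π* satisfies |Q_t(x,u;π*) − Q_t(x,u′;π*)| ≤ δ (so that switching a single action changes the cost-to-go by at most δ); (ii) there is ε_θ* ≥ 0 such that KL(π_θ(x) ‖ π*(x)) ≤ ε_θ* for every state x; (iii) there is ε_λθ ≥ 0 such that KL(π_λ(x) ‖ π_θ(x)) ≤ ε_λθ for every state x. Then the total expected cost of the learned policy satisfies J(π_θ) ≤ J(π*) + δ·T·√ε_θ* + δ·T·(T+1)·√ε_θ*·√ε_λθ. -/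
/-!
The bound follows from the performance difference argument. Write `V_n(x) = E_{u ∼ π*(x)} Q_n(x,u;π*)`.
For every policy `π`, the Bellman recursion gives
`E_{d_π^t} E_π [c] = E_{d_π^t} E_π [Q_n] - E_{d_π^{t+1}} [V_{n-1}]`, where `n` is the number of
remaining steps (`cost_step`). For `π = π*` the right-hand side telescopes, so `J(π*) = E_{μ₁}[V_T]`.
For `π = π_θ` each step differs from a telescoping one by `E_{π_θ}[Q_n] - E_{π*}[Q_n]`, which is at
most `δ · TV(π_θ, π*)` because `Q_n` has range at most `δ` (`pmfExp_sub_le`), and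
`TV ≤ √KL` (`tvDist_le_sqrt`, through the Hellinger distance). This yields
`J(π_θ) ≤ J(π*) + δ T √ε_θ*`; the remaining term of the bound is nonnegative.
-/

open Finset

/-- Expectation of `f` under a PMF on a finite type. -/
noncomputable def pmfExp {α : Type*} [Fintype α] (P : PMF α) (f : α → ℝ) : ℝ :=
  ∑ a, (P a).toReal * f a

/-- Total variation distance `TV(P,Q) = (1/2)·Σ_a |P(a) − Q(a)|`. -/
noncomputable def tvDist {α : Type*} [Fintype α] (P Q : PMF α) : ℝ :=
  (1 / 2) * ∑ a, |(P a).toReal - (Q a).toReal|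

/-- KL divergence `KL(P‖Q) = Σ_a P(a)·ln(P(a)/Q(a))`, interpreted as `+∞`
if `P` is not absolutely continuous with respect to `Q`. -/
noncomputable def klDivPMF {α : Type*} [Fintype α] (P Q : PMF α) : EReal :=
  if ∀ a, Q a = 0 → P a = 0 then
    (((∑ a, (P a).toReal * Real.log ((P a).toReal / (Q a).toReal)) : ℝ) : EReal)
  else ⊤

/-- State distribution of the MDP: `stateDist p π μ₁ n` is the distribution `d_π^{n+1}`
of the state at time `n+1` when executing policy `π` from initial distribution `μ₁`,
i.e. `d_π^1 = μ₁` and `d_π^{t+1}(x′) = Σ_{x,u} d_π^t(x)·π(u|x)·p(x′|x,u)`. -/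
noncomputable def stateDist {S A : Type*} (p : S → A → PMF S) (π : S → PMF A)
    (μ₁ : PMF S) : ℕ → PMF S
  | 0 => μ₁
  | n + 1 => (stateDist p π μ₁ n).bind fun x => (π x).bind fun u => p x u

/-- Total expected cost `J(π) = Σ_{t=1}^T E_{x∼d_π^t} E_{u∼π(x)}[c(x,u)]`. -/
noncomputable def totalCost {S A : Type*} [Fintype S] [Fintype A] (p : S → A → PMF S)
    (c : S → A → ℝ) (μ₁ : PMF S) (T : ℕ) (π : S → PMF A) : ℝ :=
  ∑ t ∈ Finset.range T,
    pmfExp (stateDist p π μ₁ t) fun x => pmfExp (π x) fun u => c x u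

/-- Action-conditioned cost-to-go: `Qact p c π̄ t x u` is the expected sum of costs
over `t` steps obtained by taking action `u` in state `x` and thereafter following
`π̄` for the remaining `t−1` steps. -/
noncomputable def Qact {S A : Type*} [Fintype S] [Fintype A] (p : S → A → PMF S)
    (c : S → A → ℝ) (πbar : S → PMF A) : ℕ → S → A → ℝ
  | 0, _, _ => 0
  | t + 1, x, u =>
      c x u + pmfExp (p x u) fun x' => pmfExp (πbar x') fun u' => Qact p c πbar t x' u'

/-- `Qpol p c π π̄ t x = Q_t(x, π, π̄)`: expected cost of sampling the first action
from `π(x)` and following `π̄` for the remaining `t−1` steps. -/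
noncomputable def Qpol {S A : Type*} [Fintype S] [Fintype A] (p : S → A → PMF S)
    (c : S → A → ℝ) (π πbar : S → PMF A) (t : ℕ) (x : S) : ℝ :=
  pmfExp (π x) fun u => Qact p c πbar t x u

section Helpers

variable {α : Type*} [Fintype α]

lemma pmf_sum_toReal (P : PMF α) : ∑ a, (P a).toReal = 1 := by
  have h : ∑ a, P a = 1 := by rw [← tsum_fintype (L := .unconditional _)]; exact P.tsum_coe
  rw [← ENNReal.toReal_sum (fun a _ => P.apply_ne_top a), h]
  simp

/-- The inequality `ln y ≤ y - 1` at `y = √(q/p)`, multiplied by `-2p`; summed over the space it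
bounds the squared Hellinger distance by the KL divergence. -/
lemma hellinger_pointwise {p q : ℝ} (hp : 0 ≤ p) (hq : 0 ≤ q) (h : q = 0 → p = 0) :
    2 * p - 2 * (√p * √q) ≤ p * Real.log (p / q) := by
  rcases hp.eq_or_lt with rfl | hp
  · simp
  have hq : 0 < q := lt_of_le_of_ne hq fun h' => hp.ne' (h h'.symm)
  have hsp := Real.sqrt_pos.2 hp
  have hsq := Real.sqrt_pos.2 hq
  have h1 := Real.log_le_sub_one_of_pos (div_pos hsq hsp)
  rw [Real.log_div hsq.ne' hsp.ne', Real.log_sqrt hq.le, Real.log_sqrt hp.le] at h1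
  rw [Real.log_div hp.ne' hq.ne']
  have h2 : p * (√q / √p) = √p * √q := by
    field_simp
    rw [Real.sq_sqrt hp.le]
  nlinarith [mul_le_mul_of_nonneg_left h1 hp.le]

/-- A weak form of Pinsker's inequality, `TV² ≤ H² ≤ KL`, with `H² = Σ (√P - √Q)²`. -/
lemma tvDist_le_sqrt (P Q : PMF α) (ε : ℝ) (h : klDivPMF P Q ≤ (ε : EReal)) :
    tvDist P Q ≤ √ε := by
  unfold klDivPMF at h
  split_ifs at h with hac
  swap
  · simp at h
  rw [EReal.coe_le_coe_iff] at h
  set f : α → ℝ := fun a => (P a).toReal with hf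
  set g : α → ℝ := fun a => (Q a).toReal with hg
  have hf0 : ∀ a, 0 ≤ f a := fun a => ENNReal.toReal_nonneg
  have hg0 : ∀ a, 0 ≤ g a := fun a => ENNReal.toReal_nonneg
  have hf1 : ∑ a, f a = 1 := pmf_sum_toReal P
  have hg1 : ∑ a, g a = 1 := pmf_sum_toReal Q
  have hfg : ∀ a, g a = 0 → f a = 0 := fun a ha => by
    have : Q a = 0 := by simpa [hg, ENNReal.toReal_eq_zero_iff, Q.apply_ne_top a] using ha
    simp [hf, hac a this]
  have hkl : 2 - 2 * ∑ a, √(f a) * √(g a) ≤ ε := by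
    refine le_trans ?_ h
    calc 2 - 2 * ∑ a, √(f a) * √(g a) = ∑ a, (2 * f a - 2 * (√(f a) * √(g a))) := by
          rw [Finset.sum_sub_distrib, ← Finset.mul_sum, ← Finset.mul_sum, hf1, mul_one]
      _ ≤ _ := Finset.sum_le_sum fun a _ => hellinger_pointwise (hf0 a) (hg0 a) (hfg a)
  have hm : ∑ a, (√(f a) - √(g a)) ^ 2 = 2 - 2 * ∑ a, √(f a) * √(g a) := by
    have : ∀ a, (√(f a) - √(g a)) ^ 2 = f a + g a - 2 * (√(f a) * √(g a)) := fun a => by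
      nlinarith [Real.sq_sqrt (hf0 a), Real.sq_sqrt (hg0 a)]
    simp_rw [this]
    rw [Finset.sum_sub_distrib, Finset.sum_add_distrib, ← Finset.mul_sum, hf1, hg1]
    ring
  have hp : ∑ a, (√(f a) + √(g a)) ^ 2 ≤ 4 := by
    have : ∀ a, (√(f a) + √(g a)) ^ 2 ≤ 2 * f a + 2 * g a := fun a => by
      nlinarith [Real.sq_sqrt (hf0 a), Real.sq_sqrt (hg0 a), sq_nonneg (√(f a) - √(g a))]
    refine (Finset.sum_le_sum fun a _ => this a).trans ?_
    rw [Finset.sum_add_distrib, ← Finset.mul_sum, ← Finset.mul_sum, hf1, hg1]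
    norm_num
  have habs : ∀ a, |f a - g a| = |√(f a) - √(g a)| * |√(f a) + √(g a)| := fun a => by
    rw [← abs_mul]
    congr 1
    nlinarith [Real.sq_sqrt (hf0 a), Real.sq_sqrt (hg0 a)]
  have hcs := Finset.sum_mul_sq_le_sq_mul_sq Finset.univ
    (fun a => |√(f a) - √(g a)|) (fun a => |√(f a) + √(g a)|)
  simp only [sq_abs, ← habs] at hcs
  have hH0 : 0 ≤ ∑ a, (√(f a) - √(g a)) ^ 2 := Finset.sum_nonneg fun a _ => sq_nonneg _
  apply Real.le_sqrt_of_sq_le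
  change ((1 / 2) * ∑ a, |f a - g a|) ^ 2 ≤ ε
  nlinarith [mul_le_mul_of_nonneg_left hp hH0]

lemma pmfExp_sub_le (P Q : PMF α) (f : α → ℝ) (δ : ℝ)
    (h : ∀ a b, |f a - f b| ≤ δ) : pmfExp P f - pmfExp Q f ≤ δ * tvDist P Q := by
  obtain ⟨a₀, -⟩ := P.support_nonempty
  obtain ⟨m, -, hm⟩ := Finset.exists_min_image Finset.univ f ⟨a₀, Finset.mem_univ _⟩
  have hP := pmf_sum_toReal P
  have hQ := pmf_sum_toReal Q
  -- Centre `f` at its minimum, so that only the positive part of `P - Q` contributes.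
  have h1 : pmfExp P f - pmfExp Q f
      = ∑ a, ((P a).toReal - (Q a).toReal) * (f a - f m) := by
    simp only [pmfExp, sub_mul, mul_sub, Finset.sum_sub_distrib, ← Finset.sum_mul, hP, hQ]
    ring
  have h2 : δ * tvDist P Q = ∑ a, (|(P a).toReal - (Q a).toReal|
      + ((P a).toReal - (Q a).toReal)) / 2 * δ := by
    rw [← Finset.sum_mul, ← Finset.sum_div, Finset.sum_add_distrib, Finset.sum_sub_distrib, hP, hQ,
      tvDist]
    ring
  rw [h1, h2]
  refine Finset.sum_le_sum fun a _ => ?_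
  have h3 := hm a (Finset.mem_univ _)
  have h4 := (le_abs_self _).trans (h a m)
  set d := (P a).toReal - (Q a).toReal
  rcases le_total 0 d with hd | hd
  · rw [abs_of_nonneg hd]; nlinarith
  · rw [abs_of_nonpos hd]; nlinarith

lemma pmfExp_add (P : PMF α) (f g : α → ℝ) :
    pmfExp P (fun a => f a + g a) = pmfExp P f + pmfExp P g := by
  simp [pmfExp, mul_add, Finset.sum_add_distrib]

lemma pmfExp_const (P : PMF α) (r : ℝ) : pmfExp P (fun _ => r) = r := by
  simp [pmfExp, ← Finset.sum_mul, pmf_sum_toReal]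

lemma pmfExp_mono (P : PMF α) {f g : α → ℝ} (h : ∀ a, f a ≤ g a) : pmfExp P f ≤ pmfExp P g :=
  Finset.sum_le_sum fun a _ => mul_le_mul_of_nonneg_left (h a) ENNReal.toReal_nonneg

lemma pmfExp_bind {β : Type*} [Fintype β] (P : PMF α) (k : α → PMF β) (f : β → ℝ) :
    pmfExp (P.bind k) f = pmfExp P fun a => pmfExp (k a) f := by
  have h : ∀ b, (P.bind k b).toReal = ∑ a, (P a).toReal * (k a b).toReal := fun b => by
    rw [PMF.bind_apply, tsum_fintype, ENNReal.toReal_sum]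
    · simp
    · exact fun a _ => ENNReal.mul_ne_top (P.apply_ne_top a) ((k a).apply_ne_top b)
  simp only [pmfExp, h, Finset.sum_mul, Finset.mul_sum, mul_assoc]
  exact Finset.sum_comm

/-- The Bellman recursion averaged over the state distribution of an arbitrary policy `π`: the cost
incurred in one step, in terms of the cost-to-go of `πbar` before and after that step. -/
lemma cost_step {S A : Type*} [Fintype S] [Fintype A] (p : S → A → PMF S) (c : S → A → ℝ)
    (μ₁ : PMF S) (π πbar : S → PMF A) (t n : ℕ) :
    (pmfExp (stateDist p π μ₁ t) fun x => pmfExp (π x) fun u => c x u)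
      = pmfExp (stateDist p π μ₁ t) (Qpol p c π πbar (n + 1))
        - pmfExp (stateDist p π μ₁ (t + 1)) (Qpol p c πbar πbar n) := by
  have h : Qpol p c π πbar (n + 1) = fun x => (pmfExp (π x) fun u => c x u)
      + pmfExp (π x) fun u => pmfExp (p x u) (Qpol p c πbar πbar n) := by
    funext x
    rw [← pmfExp_add]
    rfl
  rw [h, pmfExp_add, stateDist, pmfExp_bind]
  simp only [pmfExp_bind]
  ring

/-- If one step of `π` costs at most `r` more than one step of `πbar`, measured by the cost-to-go
of `πbar`, then over `T` steps the excess is at most `T * r`. -/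
lemma totalCost_le {S A : Type*} [Fintype S] [Fintype A] (p : S → A → PMF S) (c : S → A → ℝ)
    (μ₁ : PMF S) (π πbar : S → PMF A) (T : ℕ) (r : ℝ)
    (h : ∀ n, 1 ≤ n → n ≤ T → ∀ x, Qpol p c π πbar n x ≤ Qpol p c πbar πbar n x + r) :
    totalCost p c μ₁ T π ≤ pmfExp μ₁ (Qpol p c πbar πbar T) + T * r := by
  have key : ∀ t ≤ T, totalCost p c μ₁ t π
      + pmfExp (stateDist p π μ₁ t) (Qpol p c πbar πbar (T - t))
      ≤ pmfExp μ₁ (Qpol p c πbar πbar T) + t * r := by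
    intro t
    induction t with
    | zero => intro _; simp [totalCost, stateDist]
    | succ t ih =>
      intro ht
      have ih := ih (by omega)
      have hstep := cost_step p c μ₁ π πbar t (T - (t + 1))
      rw [show T - (t + 1) + 1 = T - t by omega] at hstep
      have hle := pmfExp_mono (stateDist p π μ₁ t) (h (T - t) (by omega) (by omega))
      rw [pmfExp_add, pmfExp_const] at hle
      have hsucc : totalCost p c μ₁ (t + 1) π = totalCost p c μ₁ t π
          + pmfExp (stateDist p π μ₁ t) fun x => pmfExp (π x) fun u => c x u :=
        Finset.sum_range_succ _ _
      push_cast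
      linarith
  have hT := key T le_rfl
  have h0 : pmfExp (stateDist p π μ₁ T) (Qpol p c πbar πbar (T - T)) = 0 := by
    simp [pmfExp, Qpol, Qact]
  linarith

lemma totalCost_eq {S A : Type*} [Fintype S] [Fintype A] (p : S → A → PMF S) (c : S → A → ℝ)
    (μ₁ : PMF S) (π : S → PMF A) (T : ℕ) :
    totalCost p c μ₁ T π = pmfExp μ₁ (Qpol p c π π T) := by
  have key : ∀ t ≤ T, totalCost p c μ₁ t π
      + pmfExp (stateDist p π μ₁ t) (Qpol p c π π (T - t)) = pmfExp μ₁ (Qpol p c π π T) := by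
    intro t
    induction t with
    | zero => intro _; simp [totalCost, stateDist]
    | succ t ih =>
      intro ht
      have ih := ih (by omega)
      have hstep := cost_step p c μ₁ π π t (T - (t + 1))
      rw [show T - (t + 1) + 1 = T - t by omega] at hstep
      have hsucc : totalCost p c μ₁ (t + 1) π = totalCost p c μ₁ t π
          + pmfExp (stateDist p π μ₁ t) fun x => pmfExp (π x) fun u => c x u :=
        Finset.sum_range_succ _ _
      linarith
  have h0 : pmfExp (stateDist p π μ₁ T) (Qpol p c π π (T - T)) = 0 := by
    simp [pmfExp, Qpol, Qact]
  have hT := key T le_rfl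
  linarith

end Helpers

/-- **PLATO bound (Theorem 1).** If (i) the action-conditioned cost-to-go of the MPC
expert `π*` has range at most `δ` at every state and horizon `t ∈ {1,…,T}`,
(ii) `KL(π_θ(x) ‖ π*(x)) ≤ ε_θ*` for every state `x`, and
(iii) `KL(π_λ(x) ‖ π_θ(x)) ≤ ε_λθ` for every state `x`, then
`J(π_θ) ≤ J(π*) + δ·T·√ε_θ* + δ·T·(T+1)·√ε_θ*·√ε_λθ`. -/
theorem plato_total_cost_bound {S A : Type*} [Fintype S] [Fintype A]
    (T : ℕ) (μ₁ : PMF S) (p : S → A → PMF S) (c : S → A → ℝ)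
    (hc : ∀ x u, c x u ∈ Set.Icc (0 : ℝ) 1)
    (πstar πθ πlam : S → PMF A)
    (δ : ℝ) (hδ : 0 ≤ δ)
    (hQ : ∀ (x : S) (t : ℕ), 1 ≤ t → t ≤ T → ∀ u u' : A,
      |Qact p c πstar t x u - Qact p c πstar t x u'| ≤ δ)
    (εθ εlam : ℝ) (hεθ : 0 ≤ εθ) (hεlam : 0 ≤ εlam)
    (hklθ : ∀ x, klDivPMF (πθ x) (πstar x) ≤ ((εθ : ℝ) : EReal))
    (hkllam : ∀ x, klDivPMF (πlam x) (πθ x) ≤ ((εlam : ℝ) : EReal)) :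
    totalCost p c μ₁ T πθ ≤ totalCost p c μ₁ T πstar
      + δ * T * Real.sqrt εθ
      + δ * T * (T + 1) * Real.sqrt εθ * Real.sqrt εlam := by
  have h := totalCost_le p c μ₁ πθ πstar T (δ * √εθ) fun n hn hnT x => by
    have h1 := pmfExp_sub_le (πθ x) (πstar x) (Qact p c πstar n x) δ (hQ x n hn hnT)
    have h2 := mul_le_mul_of_nonneg_left (tvDist_le_sqrt _ _ _ (hklθ x)) hδ
    change pmfExp (πθ x) (Qact p c πstar n x) ≤ pmfExp (πstar x) (Qact p c πstar n x) + _
    linarith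
  rw [← totalCost_eq] at h
  have h3 : 0 ≤ δ * T * (T + 1) * √εθ * √εlam := by positivity
  linarith
end

section
/- (State-distribution shift bound.) Let π and π̃ be two policies in a finite-horizon MDP with shared initial distribution μ₁ and dynamics p, and suppose the per-state KL divergence is uniformly bounded: KL(π(x) ‖ π̃(x)) ≤ ε for all states x. Then for every time t ≥ 1, the induced state distributions satisfy ‖d_π^t − d_π̃^t‖₁ = Σ_x |d_π^t(x) − d_π̃^t(x)| ≤ 2·t·√ε. -/
/-!
The `ℓ¹` distance between the outputs of two Markov kernels exceeds that between their inputs by at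
most the worst per-point distance between the kernels (`sum_abs_bind_sub_le`). Each time step
therefore adds at most `sup_x ‖π(x) − π̃(x)‖₁` to the distance between the state distributions.

The per-state distance is bounded by `2√KL` (`sum_abs_sub_le_of_klDivPMF_le`) by going through the
squared Hellinger distance `H² = Σ (√P − √Q)²`: the inequality `log y ≤ y − 1` gives `H² ≤ KL`, while
Cauchy–Schwarz applied to `|P − Q| = |√P − √Q| (√P + √Q)` gives `‖P − Q‖₁² ≤ 4 H²`. Pinsker's
inequality would give a better constant but is not needed.
-/

open Finset

lemma sum_toReal_pmf {α : Type*} [Fintype α] (P : PMF α) : ∑ a, (P a).toReal = 1 := by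
  rw [← ENNReal.toReal_sum fun a _ => P.apply_ne_top a, ← tsum_fintype (L := .unconditional α), P.tsum_coe,
    ENNReal.toReal_one]

/-- One term of the inequality `H² ≤ KL`; the corrections `a - b` sum to zero over two
probability vectors. -/
lemma sq_sqrt_sub_sqrt_le {a b : ℝ} (ha : 0 ≤ a) (hb : 0 ≤ b) (hab : b = 0 → a = 0) :
    (√a - √b) ^ 2 + (a - b) ≤ a * Real.log (a / b) := by
  rcases ha.eq_or_lt with rfl | ha'
  · simp [Real.sq_sqrt hb]
  have hb' : 0 < b := hb.lt_of_ne fun h => ha'.ne' (hab h.symm)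
  have hsa := Real.sqrt_pos.2 ha'
  have hsb := Real.sqrt_pos.2 hb'
  have h := Real.log_le_sub_one_of_pos (div_pos hsb hsa)
  have hlog : Real.log (a / b) = -2 * Real.log (√b / √a) := by
    rw [Real.log_div ha'.ne' hb'.ne', Real.log_div hsb.ne' hsa.ne', Real.log_sqrt hb,
      Real.log_sqrt ha]
    ring
  have hmul : a * (√b / √a) = √a * √b := by
    field_simp
    rw [Real.sq_sqrt ha]
  have h2 := mul_le_mul_of_nonneg_left h ha
  rw [hlog]
  nlinarith [Real.sq_sqrt ha, Real.sq_sqrt hb]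

/-- A Pinsker-type inequality with constant `2`, which is weaker than the optimal `√2`. -/
lemma sum_abs_sub_le_of_klDivPMF_le {α : Type*} [Fintype α] (P Q : PMF α) {ε : ℝ}
    (h : klDivPMF P Q ≤ (ε : EReal)) :
    ∑ a, |(P a).toReal - (Q a).toReal| ≤ 2 * √ε := by
  unfold klDivPMF at h
  split_ifs at h with hac
  swap
  · simp at h
  rw [EReal.coe_le_coe_iff] at h
  set f : α → ℝ := fun a => √(P a).toReal with hf
  set g : α → ℝ := fun a => √(Q a).toReal with hg
  have hf2 : ∀ a, f a ^ 2 = (P a).toReal := fun a => Real.sq_sqrt ENNReal.toReal_nonneg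
  have hg2 : ∀ a, g a ^ 2 = (Q a).toReal := fun a => Real.sq_sqrt ENNReal.toReal_nonneg
  have hf0 : ∀ a, 0 ≤ f a := fun a => Real.sqrt_nonneg _
  have hg0 : ∀ a, 0 ≤ g a := fun a => Real.sqrt_nonneg _
  have hH : ∑ a, (f a - g a) ^ 2 ≤ ε := by
    refine le_trans ?_ h
    have := Finset.sum_le_sum fun a (_ : a ∈ Finset.univ) =>
      sq_sqrt_sub_sqrt_le (a := (P a).toReal) (b := (Q a).toReal)
        ENNReal.toReal_nonneg ENNReal.toReal_nonneg (fun h0 => by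
          rw [ENNReal.toReal_eq_zero_iff, or_iff_left (Q.apply_ne_top a)] at h0
          simp [hac a h0])
    rw [Finset.sum_add_distrib, Finset.sum_sub_distrib, sum_toReal_pmf, sum_toReal_pmf] at this
    linarith
  have hS : ∑ a, (f a + g a) ^ 2 ≤ 4 := by
    calc ∑ a, (f a + g a) ^ 2 ≤ ∑ a, (2 * (P a).toReal + 2 * (Q a).toReal) :=
          Finset.sum_le_sum fun a _ => by
            rw [← hf2, ← hg2]
            nlinarith [sq_nonneg (f a - g a)]
      _ = 4 := by
          rw [Finset.sum_add_distrib, ← Finset.mul_sum, ← Finset.mul_sum, sum_toReal_pmf,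
            sum_toReal_pmf]
          norm_num
  have hprod : ∀ a, |(P a).toReal - (Q a).toReal| = |f a - g a| * (f a + g a) := fun a => by
    rw [← hf2, ← hg2, sq_sub_sq, abs_mul, abs_of_nonneg (add_nonneg (hf0 a) (hg0 a)), mul_comm]
  have hcs := Finset.sum_mul_sq_le_sq_mul_sq Finset.univ (fun a => |f a - g a|)
    (fun a => f a + g a)
  simp only [sq_abs, ← hprod] at hcs
  have hε : 0 ≤ ε := (Finset.sum_nonneg fun a _ => sq_nonneg (f a - g a)).trans hH
  refine abs_le_of_sq_le_sq' ?_ (by positivity) |>.2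
  rw [mul_pow, Real.sq_sqrt hε]
  calc _ ≤ _ := hcs
    _ ≤ ε * 4 := mul_le_mul hH hS (Finset.sum_nonneg fun a _ => sq_nonneg _) hε
    _ = 2 ^ 2 * ε := by ring

lemma toReal_bind_apply {α β : Type*} [Fintype α] (P : PMF α) (k : α → PMF β) (b : β) :
    (P.bind k b).toReal = ∑ a, (P a).toReal * (k a b).toReal := by
  rw [PMF.bind_apply, tsum_fintype, ENNReal.toReal_sum fun a _ =>
    ENNReal.mul_ne_top (P.apply_ne_top a) ((k a).apply_ne_top b)]
  simp

/-- Stability of `bind` in the `ℓ¹` distance; for `k = l` and `c = 0` this is the data-processing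
inequality. -/
lemma sum_abs_bind_sub_le {α β : Type*} [Fintype α] [Fintype β] (P Q : PMF α)
    (k l : α → PMF β) (c : ℝ) (hc : ∀ a, ∑ b, |(k a b).toReal - (l a b).toReal| ≤ c) :
    ∑ b, |(P.bind k b).toReal - (Q.bind l b).toReal|
      ≤ ∑ a, |(P a).toReal - (Q a).toReal| + c := by
  calc ∑ b, |(P.bind k b).toReal - (Q.bind l b).toReal|
      ≤ ∑ b, ∑ a, (|(P a).toReal - (Q a).toReal| * (k a b).toReal
          + (Q a).toReal * |(k a b).toReal - (l a b).toReal|) := by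
        refine Finset.sum_le_sum fun b _ => ?_
        rw [toReal_bind_apply, toReal_bind_apply, ← Finset.sum_sub_distrib]
        refine (Finset.abs_sum_le_sum_abs _ _).trans (Finset.sum_le_sum fun a _ => ?_)
        have e : (P a).toReal * (k a b).toReal - (Q a).toReal * (l a b).toReal
            = ((P a).toReal - (Q a).toReal) * (k a b).toReal
              + (Q a).toReal * ((k a b).toReal - (l a b).toReal) := by ring
        rw [e]
        refine (abs_add_le _ _).trans_eq ?_
        rw [abs_mul, abs_mul, abs_of_nonneg (ENNReal.toReal_nonneg (a := k a b)),
          abs_of_nonneg (ENNReal.toReal_nonneg (a := Q a))]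
    _ = ∑ a, |(P a).toReal - (Q a).toReal|
          + ∑ a, (Q a).toReal * ∑ b, |(k a b).toReal - (l a b).toReal| := by
        rw [Finset.sum_comm, ← Finset.sum_add_distrib]
        refine Finset.sum_congr rfl fun a _ => ?_
        rw [Finset.sum_add_distrib, ← Finset.mul_sum, ← Finset.mul_sum, sum_toReal_pmf, mul_one]
    _ ≤ ∑ a, |(P a).toReal - (Q a).toReal| + ∑ a, (Q a).toReal * c := by
        gcongr with a
        exact hc a
    _ = _ := by rw [← Finset.sum_mul, sum_toReal_pmf, one_mul]

/-- The bound at time `n + 1`, one step sharper than required since both chains start from `μ₁`. -/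
lemma sum_abs_stateDist_sub_le {S A : Type*} [Fintype S] [Fintype A]
    (μ₁ : PMF S) (p : S → A → PMF S) (π πbar : S → PMF A) (ε : ℝ)
    (hkl : ∀ x, klDivPMF (π x) (πbar x) ≤ (ε : EReal)) (n : ℕ) :
    ∑ x, |(stateDist p π μ₁ n x).toReal - (stateDist p πbar μ₁ n x).toReal|
      ≤ 2 * n * √ε := by
  induction n with
  | zero => simp [stateDist]
  | succ n ih =>
    refine (sum_abs_bind_sub_le _ _ _ _ (2 * √ε) fun x => ?_).trans ?_
    · refine (sum_abs_bind_sub_le (π x) (πbar x) (p x) (p x) 0 fun u => by simp).trans ?_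
      rw [add_zero]
      exact sum_abs_sub_le_of_klDivPMF_le _ _ (hkl x)
    · push_cast
      linarith

/-- **State-distribution shift bound.** If `KL(π(x) ‖ π̃(x)) ≤ ε` for all states `x`,
then for every time `t ≥ 1` (recall `d_π^t = stateDist p π μ₁ (t-1)`),
`‖d_π^t − d_π̃^t‖₁ = Σ_x |d_π^t(x) − d_π̃^t(x)| ≤ 2·t·√ε`. -/
theorem state_distribution_shift {S A : Type*} [Fintype S] [Fintype A]
    (μ₁ : PMF S) (p : S → A → PMF S) (π πbar : S → PMF A) (ε : ℝ)
    (hkl : ∀ x, klDivPMF (π x) (πbar x) ≤ ((ε : ℝ) : EReal)) :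
    ∀ t : ℕ, 1 ≤ t →
      ∑ x, |(stateDist p π μ₁ (t - 1) x).toReal - (stateDist p πbar μ₁ (t - 1) x).toReal|
        ≤ 2 * t * Real.sqrt ε := by
  intro t ht
  refine (sum_abs_stateDist_sub_le μ₁ p π πbar ε hkl (t - 1)).trans ?_
  gcongr
  exact Nat.sub_le t 1
end
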